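/- For every pair of integers p and q with q ≥ 1, one has |p + q·e| ≥ (1/(q−1)!)·min{3 − e, 1/(q+1)}. -/

import Mathlib

/-!
Let `r q = q! (e - ∑_{m ≤ q} 1 / m!)`, which differs from `q! e` by an integer. Then
`(q - 1)! (p + q e) = (q - 1)! p + q! e` also differs from `r q` by an integer, so its absolute
value is at least `min (1 - r q) (r q)`. The recursion `r (q + 1) = (q + 1) r q - 1` gives both
bounds on `r q`: since `r (q + 1) ≥ 0`, it yields `r q ≥ 1 / (q + 1)`; combined with the tail bound
`q * r q ≤ 1`, it shows that `r` decreases, so `r q ≤ r 1 = e - 2`.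
-/

open Finset
open scoped Nat

/-- The remainder of the exponential series of `x` after the term of degree `n`, scaled by `n!`.
The scaling makes the subtracted partial sum an integer when `x` is an integer. -/
noncomputable def scaledExpRemainder (x : ℝ) (n : ℕ) : ℝ :=
  n ! * (Real.exp x - ∑ m ∈ range (n + 1), x ^ m / m !)

theorem scaledExpRemainder_zero (x : ℝ) : scaledExpRemainder x 0 = Real.exp x - 1 := by
  simp [scaledExpRemainder]

theorem scaledExpRemainder_succ (x : ℝ) (n : ℕ) :
    scaledExpRemainder x (n + 1) = (n + 1) * scaledExpRemainder x n - x ^ (n + 1) := by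
  have cancel : ((n + 1)! : ℝ) * (x ^ (n + 1) / (n + 1)!) = x ^ (n + 1) :=
    mul_div_cancel₀ _ (by positivity)
  rw [scaledExpRemainder, sum_range_succ, ← sub_sub, mul_sub, cancel, Nat.factorial_succ,
    scaledExpRemainder]
  push_cast
  ring

theorem exists_int_factorial_mul_exp_eq_add_scaledExpRemainder (a : ℤ) (n : ℕ) :
    ∃ N : ℤ, n ! * Real.exp a = N + scaledExpRemainder a n := by
  induction n with
  | zero => exact ⟨1, by simp [scaledExpRemainder_zero]⟩
  | succ n ih =>
    obtain ⟨N, hN⟩ := ih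
    refine ⟨(n + 1) * N + a ^ (n + 1), ?_⟩
    rw [scaledExpRemainder_succ, Nat.factorial_succ]
    push_cast
    linear_combination (n + 1 : ℝ) * hN

theorem scaledExpRemainder_nonneg {x : ℝ} (hx : 0 ≤ x) (n : ℕ) : 0 ≤ scaledExpRemainder x n :=
  mul_nonneg (by positivity) (sub_nonneg.2 (Real.sum_le_exp_of_nonneg hx _))

theorem pow_succ_div_le_scaledExpRemainder {x : ℝ} (hx : 0 ≤ x) (n : ℕ) :
    x ^ (n + 1) / (n + 1) ≤ scaledExpRemainder x n := by
  rw [div_le_iff₀' (by positivity), ← sub_nonneg, ← scaledExpRemainder_succ]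
  exact scaledExpRemainder_nonneg hx (n + 1)

theorem scaledExpRemainder_le_pow_succ_mul {x : ℝ} (hx : 0 ≤ x) (hx1 : x ≤ 1) (n : ℕ) :
    scaledExpRemainder x n ≤ x ^ (n + 1) * ((n + 2) / (n + 1) ^ 2) := by
  have tail_le : Real.exp x - ∑ m ∈ range (n + 1), x ^ m / m ! ≤
      x ^ (n + 1) * ((n + 1 : ℕ) + 1) / ((n + 1)! * (n + 1 : ℕ)) :=
    sub_le_iff_le_add'.2 (Real.exp_bound' hx hx1 n.succ_pos)
  refine (mul_le_mul_of_nonneg_left tail_le (by positivity)).trans_eq ?_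
  rw [Nat.factorial_succ]
  push_cast
  field_simp
  ring

theorem natCast_mul_scaledExpRemainder_le_pow_succ {x : ℝ} (hx : 0 ≤ x) (hx1 : x ≤ 1) (n : ℕ) :
    n * scaledExpRemainder x n ≤ x ^ (n + 1) := by
  have coeff_le_one : (n : ℝ) * ((n + 2) / (n + 1) ^ 2) ≤ 1 := by
    rw [← mul_div_assoc, div_le_one (by positivity)]
    linarith
  calc n * scaledExpRemainder x n
      ≤ n * (x ^ (n + 1) * ((n + 2) / (n + 1) ^ 2)) := by
        gcongr
        exact scaledExpRemainder_le_pow_succ_mul hx hx1 n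
    _ = x ^ (n + 1) * (n * ((n + 2) / (n + 1) ^ 2)) := by ring
    _ ≤ x ^ (n + 1) := mul_le_of_le_one_right (by positivity) coeff_le_one

theorem antitone_scaledExpRemainder {x : ℝ} (hx : 0 ≤ x) (hx1 : x ≤ 1) :
    Antitone (scaledExpRemainder x) :=
  antitone_nat_of_succ_le fun n ↦ by
    rw [scaledExpRemainder_succ]
    linarith [natCast_mul_scaledExpRemainder_le_pow_succ hx hx1 n]

theorem min_one_sub_self_le_abs_intCast_add (r : ℝ) (z : ℤ) : min (1 - r) r ≤ |z + r| := by
  rcases le_or_gt 0 z with z_nonneg | z_neg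
  · have : (0 : ℝ) ≤ z := mod_cast z_nonneg
    exact (min_le_right _ _).trans (le_abs.2 (.inl (by linarith)))
  · have : (z : ℝ) ≤ -1 := mod_cast Int.le_sub_one_of_lt z_neg
    exact (min_le_left _ _).trans (le_abs.2 (.inr (by linarith)))

theorem min_scaledExpRemainder_le_factorial_mul_abs (a p : ℤ) (n : ℕ) :
    min (1 - scaledExpRemainder a (n + 1)) (scaledExpRemainder a (n + 1)) ≤
      n ! * |p + (n + 1 : ℕ) * Real.exp a| := by
  obtain ⟨N, hN⟩ := exists_int_factorial_mul_exp_eq_add_scaledExpRemainder a (n + 1)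
  have shift_by_int : n ! * (p + (n + 1 : ℕ) * Real.exp a) =
      (n ! * p + N : ℤ) + scaledExpRemainder a (n + 1) := by
    rw [Nat.factorial_succ] at hN
    push_cast at hN ⊢
    linear_combination hN
  rw [← Nat.abs_cast n !, ← abs_mul, shift_by_int]
  exact min_one_sub_self_le_abs_intCast_add _ _

theorem scaledExpRemainder_one_le_exp_sub_two {n : ℕ} (hn : 1 ≤ n) :
    scaledExpRemainder 1 n ≤ Real.exp 1 - 2 :=
  calc scaledExpRemainder 1 n
      ≤ scaledExpRemainder 1 1 := antitone_scaledExpRemainder zero_le_one le_rfl hn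
    _ = Real.exp 1 - 2 := by
      rw [scaledExpRemainder_succ, scaledExpRemainder_zero]
      norm_num
      ring

/-- For every pair of integers `p` and `q` with `q ≥ 1`, one has
`|p + q·e| ≥ (1/(q−1)!)·min (3 − e) (1/(q+1))`. -/
theorem stmt_1 (p : ℤ) (q : ℕ) (hq : 1 ≤ q) :
    (1 / (Nat.factorial (q - 1) : ℝ)) * min (3 - Real.exp 1) (1 / ((q : ℝ) + 1)) ≤
      |(p : ℝ) + (q : ℝ) * Real.exp 1| := by
  have upper : scaledExpRemainder 1 q ≤ Real.exp 1 - 2 := scaledExpRemainder_one_le_exp_sub_two hq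
  have lower : 1 / ((q : ℝ) + 1) ≤ scaledExpRemainder 1 q := by
    simpa only [one_pow] using pow_succ_div_le_scaledExpRemainder zero_le_one q
  obtain ⟨n, rfl⟩ := Nat.exists_eq_add_of_le' hq
  rw [Nat.add_sub_cancel, one_div_mul_eq_div, div_le_iff₀' (by positivity)]
  calc min (3 - Real.exp 1) (1 / (((n + 1 : ℕ) : ℝ) + 1))
      ≤ min (1 - scaledExpRemainder 1 (n + 1)) (scaledExpRemainder 1 (n + 1)) :=
        min_le_min (by linarith) lower
    _ ≤ n ! * |p + (n + 1 : ℕ) * Real.exp 1| := by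
      simpa only [Int.cast_one] using min_scaledExpRemainder_le_factorial_mul_abs 1 p n
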